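/- arXiv:0712.2837 — 3 statements merged into one kernel-verified Lean document; each statement's English description precedes it below -/
import Mathlib

section
/- Let n ≥ 3, let r_app and r_pos be any two sum-zero vectors in Fin n → ℚ, and let w : Fin n → ℚ be any nonzero sum-zero weighting vector. Then the set of ranked approval profiles, i.e., tuples (p₁, …, p_{n−1}) of full-ranking profiles p_i : Equiv.Perm (Fin n) → ℚ, satisfying both Σ_{i=1}^{n−1} T_{â_i}(p_i) = r_app (the approval voting outcome) and T_w(Σ_{i=1}^{n−1} p_i) = r_pos (the positional voting outcome with respect to w), is infinite. -/
/-- The positional voting map: `T_w(p)(c) = Σ_σ p(σ) · w(σ⁻¹ c)`. -/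
noncomputable def positionalOutcome (n : ℕ) (w : Fin n → ℚ)
    (p : Equiv.Perm (Fin n) → ℚ) : Fin n → ℚ :=
  fun c => ∑ σ : Equiv.Perm (Fin n), p σ * w (σ⁻¹ c)

/-- The sum-zero part `â_i` of the approval weighting vector `a_i` whose first
`i+1` entries are `1` and remaining entries are `0` (here `i : Fin (n-1)`,
representing approval of exactly the top `i+1` candidates). -/
def approvalHat (n : ℕ) (i : Fin (n - 1)) : Fin n → ℚ :=
  fun c => (if (c : ℕ) ≤ (i : ℕ) then (1 : ℚ) else 0) - ((i : ℕ) + 1) / n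

/-!
Let `u` be the family of approval weights and pick two of them, `u i` and `u j`, whose difference is
not constant. Splitting a profile `q` with `T_w q = r_pos` as `q = (q - p) + p` between the voter
types `i` and `j` fixes the positional outcome and makes the approval outcome
`T_{u i} q + T_{u j - u i} p`, so it remains to solve `T_{u j - u i} p = r_app - T_{u i} q`.
Both equations are solvable because `T_v` maps onto the sum-zero vectors for every nonconstant `v`:
exchanging two differently weighted positions in one ballot changes the outcome by a nonzero
multiple of a difference of unit vectors. The solution is not unique because the profile `1`, in
which every ballot is cast once, has outcome zero for every sum-zero weight, so multiples of it may
be moved from `j` to `i`.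
-/

section GeneralFacts

lemma sum_smul_eq_card_nsmul_sum {G α M : Type*} [Group G] [Fintype G] [MulAction G α]
    [MulAction.IsPretransitive G α] [Fintype α] [DecidableEq α] [AddCommMonoid M]
    (f : α → M) (a : α) :
    ∑ g : G, f (g • a) = Finset.card {g : G | g • a = a} • ∑ b, f b := by
  have card_fiber (b : α) :
      Finset.card {g : G | g • a = b} = Finset.card {g : G | g • a = a} := by
    obtain ⟨h, rfl⟩ := MulAction.exists_smul_eq G a b
    exact (Finset.card_equiv (Equiv.mulLeft h) (by simp [mul_smul])).symm
  calc ∑ g : G, f (g • a)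
      = ∑ b, ∑ g : G with g • a = b, f b := by
        rw [← Finset.sum_fiberwise Finset.univ (· • a)]
        exact Finset.sum_congr rfl fun b _ => Finset.sum_congr rfl (by simp +contextual)
    _ = Finset.card {g : G | g • a = a} • ∑ b, f b := by
        simp only [Finset.sum_const, card_fiber, Finset.smul_sum]

lemma exists_perm_apply_eq_and_apply_eq {α : Type*} {a b c d : α} (hab : a ≠ b) (hcd : c ≠ d) :
    ∃ σ : Equiv.Perm α, σ a = c ∧ σ b = d :=
  MulAction.is_two_pretransitive_iff.mp (Equiv.Perm.isMultiplyPretransitive α 2) hab hcd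

lemma comp_swap_sub_self {K α : Type*} [CommRing K] [DecidableEq α] (w : α → K) (a b : α) :
    w ∘ Equiv.swap a b - w = (w a - w b) • (Pi.single b 1 - Pi.single a 1) := by
  ext x
  rcases eq_or_ne x a with rfl | hxa
  · rcases eq_or_ne x b with rfl | hxb <;> simp [*]
  · rcases eq_or_ne x b with rfl | hxb <;> simp [*, Equiv.swap_apply_of_ne_of_ne]

lemma exists_ne_of_sum_eq_zero {α M : Type*} [Fintype α] [AddCommMonoid M] [IsAddTorsionFree M]
    {w : α → M} (hw : w ≠ 0) (hw0 : ∑ c, w c = 0) : ∃ a b, w a ≠ w b := by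
  by_contra! hconst
  obtain ⟨c, hc⟩ := Function.ne_iff.mp hw
  have : Nonempty α := ⟨c⟩
  simp_rw [hconst _ c] at hw0
  simp_all

lemma infinite_setOf_map_eq {K V W : Type*} [Field K] [Infinite K] [AddCommGroup V] [Module K V]
    [AddCommGroup W] [Module K W] {f : V →ₗ[K] W} {v x : V} {y : W} (hv : v ≠ 0) (hfv : f v = 0)
    (hfx : f x = y) : {z | f z = y}.Infinite :=
  Set.infinite_of_injective_forall_mem (f := fun t : K => x + t • v)
    ((add_right_injective x).comp (smul_left_injective K hv)) fun t => by simp [hfv, hfx]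

end GeneralFacts

section PositionalMap

variable {K α : Type*} [Fintype α] [DecidableEq α]

/-- The positional voting map `w ↦ p ↦ T_w p`, bilinear in the weights and the profile, over an
arbitrary finite set of candidates; the same type indexes candidates and positions. -/
def positionalMap [CommRing K] :
    (α → K) →ₗ[K] (Equiv.Perm α → K) →ₗ[K] (α → K) :=
  LinearMap.mk₂ K (fun w p c => ∑ σ : Equiv.Perm α, p σ * w (σ⁻¹ c))
    (fun w v p => by ext c; simp [mul_add, Finset.sum_add_distrib])
    (fun t w p => by ext c; simp [Finset.mul_sum, mul_left_comm])
    (fun w p q => by ext c; simp [add_mul, Finset.sum_add_distrib])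
    (fun t w p => by ext c; simp [Finset.mul_sum, mul_assoc])

section CommRing

variable [CommRing K]

lemma positionalMap_apply (w : α → K) (p : Equiv.Perm α → K) (c : α) :
    positionalMap w p c = ∑ σ : Equiv.Perm α, p σ * w (σ⁻¹ c) :=
  rfl

lemma positionalMap_single (w : α → K) (σ : Equiv.Perm α) :
    positionalMap w (Pi.single σ 1) = w ∘ σ.symm := by
  ext c
  simp [positionalMap_apply, Pi.single_apply]

lemma sum_positionalMap (w : α → K) (p : Equiv.Perm α → K) :
    ∑ c, positionalMap w p c = (∑ σ, p σ) * ∑ c, w c := by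
  simp_rw [positionalMap_apply, Finset.sum_mul]
  rw [Finset.sum_comm]
  refine Finset.sum_congr rfl fun σ _ => ?_
  rw [← Finset.mul_sum, Equiv.sum_comp σ⁻¹ w]

lemma positionalMap_one_eq_zero {w : α → K} (hw : ∑ c, w c = 0) : positionalMap w 1 = 0 := by
  ext c
  calc positionalMap w 1 c
      = ∑ σ : Equiv.Perm α, w (σ⁻¹ • c) := by simp [positionalMap_apply]
    _ = ∑ σ : Equiv.Perm α, w (σ • c) :=
        Equiv.sum_comp (Equiv.inv (Equiv.Perm α)) fun σ => w (σ • c)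
    _ = 0 := by rw [sum_smul_eq_card_nsmul_sum, hw, smul_zero]

lemma positionalMap_single_mul_swap_sub_single (w : α → K) (σ : Equiv.Perm α) (a b : α) :
    positionalMap w (Pi.single (σ * Equiv.swap a b) 1 - Pi.single σ 1) =
      (w a - w b) • (Pi.single (σ b) 1 - Pi.single (σ a) 1) := by
  have hswap := congrArg (· ∘ σ.symm) (comp_swap_sub_self w a b)
  ext c
  simpa [positionalMap_single, Pi.single_apply, Equiv.symm_apply_eq, Equiv.Perm.mul_def]
    using congrFun hswap c

end CommRing

variable [Field K] {w r : α → K} {a b : α}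

lemma exists_positionalMap_eq_single_sub_single (hab : w a ≠ w b) (c d : α) :
    ∃ p, positionalMap w p = Pi.single c 1 - Pi.single d 1 := by
  rcases eq_or_ne c d with rfl | hcd
  · exact ⟨0, by simp⟩
  obtain ⟨σ, rfl, rfl⟩ := exists_perm_apply_eq_and_apply_eq (ne_of_apply_ne w hab) hcd.symm
  refine ⟨(w a - w b)⁻¹ • (Pi.single (σ * Equiv.swap a b) 1 - Pi.single σ 1), ?_⟩
  rw [map_smul, positionalMap_single_mul_swap_sub_single, inv_smul_smul₀ (sub_ne_zero.mpr hab)]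

lemma exists_positionalMap_eq (hab : w a ≠ w b) (hr : ∑ c, r c = 0) :
    ∃ p, positionalMap w p = r := by
  choose p hp using fun c => exists_positionalMap_eq_single_sub_single hab c a
  refine ⟨∑ c, r c • p c, ?_⟩
  calc positionalMap w (∑ c, r c • p c)
      = ∑ c, r c • (Pi.single c 1 : α → K) - (∑ c, r c) • Pi.single a 1 := by
        simp_rw [map_sum, map_smul, hp, smul_sub, Finset.sum_sub_distrib, Finset.sum_smul]
    _ = r := by rw [hr, zero_smul, sub_zero, ← pi_eq_sum_univ' r]

end PositionalMap

section RankedOutcomes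

variable {K α ι : Type*} [Fintype α] [DecidableEq α] [Fintype ι]

/-- The outcomes of a ranked profile `(p i)`, one full-ranking profile per voter type `i`, as a
linear map: the first component weights the ballots of type `i` by `u i`, as approval voting does,
and the second weights all ballots by `w`. -/
def rankedOutcomes [CommRing K] (u : ι → α → K) (w : α → K) :
    (ι → Equiv.Perm α → K) →ₗ[K] (α → K) × (α → K) :=
  (∑ i, positionalMap (u i) ∘ₗ LinearMap.proj i).prod
    (positionalMap w ∘ₗ ∑ i, LinearMap.proj i)

lemma rankedOutcomes_apply [CommRing K] (u : ι → α → K) (w : α → K) (p : ι → Equiv.Perm α → K) :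
    rankedOutcomes u w p = (∑ i, positionalMap (u i) (p i), positionalMap w (∑ i, p i)) := by
  simp [rankedOutcomes]

lemma rankedOutcomes_single [CommRing K] [DecidableEq ι] (u : ι → α → K) (w : α → K) (i : ι)
    (p : Equiv.Perm α → K) :
    rankedOutcomes u w (Pi.single i p) = (positionalMap (u i) p, positionalMap w p) := by
  rw [rankedOutcomes_apply, Fintype.sum_eq_single i (by simp +contextual)]
  simp

variable [Field K] {u : ι → α → K} {i j : ι} {w rapp rpos : α → K} {a b a' b' : α}

lemma exists_rankedOutcomes_eq (hi : ∑ c, u i c = 0) (hij : (u j - u i) a ≠ (u j - u i) b)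
    (hw : w a' ≠ w b') (hrapp : ∑ c, rapp c = 0) (hrpos : ∑ c, rpos c = 0) :
    ∃ p, rankedOutcomes u w p = (rapp, rpos) := by
  classical
  obtain ⟨q, rfl⟩ := exists_positionalMap_eq hw hrpos
  have hsum : ∑ c, (rapp - positionalMap (u i) q) c = 0 := by
    simp [hrapp, sum_positionalMap, hi]
  obtain ⟨p, hp⟩ := exists_positionalMap_eq hij hsum
  rw [map_sub, LinearMap.sub_apply] at hp
  refine ⟨Pi.single i (q - p) + Pi.single j p, ?_⟩
  rw [map_add, rankedOutcomes_single, rankedOutcomes_single, Prod.mk_add_mk, ← map_add,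
    sub_add_cancel, map_sub, Prod.mk.injEq]
  exact ⟨by linear_combination hp, rfl⟩

lemma rankedOutcomes_single_one_sub_single_one [DecidableEq ι] (hi : ∑ c, u i c = 0)
    (hj : ∑ c, u j c = 0) : rankedOutcomes u w (Pi.single i 1 - Pi.single j 1) = 0 := by
  simp [rankedOutcomes_single, positionalMap_one_eq_zero, hi, hj]

theorem infinite_ranked_approval_profiles_general [Infinite K] (hi : ∑ c, u i c = 0)
    (hj : ∑ c, u j c = 0) (hij : (u j - u i) a ≠ (u j - u i) b) (hw : w a' ≠ w b')
    (hrapp : ∑ c, rapp c = 0) (hrpos : ∑ c, rpos c = 0) :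
    {p : ι → Equiv.Perm α → K |
      ∑ i, positionalMap (u i) (p i) = rapp ∧ positionalMap w (∑ i, p i) = rpos}.Infinite := by
  classical
  have hne : i ≠ j := by
    rintro rfl
    simp at hij
  have hker : (Pi.single i 1 - Pi.single j 1 : ι → Equiv.Perm α → K) ≠ 0 := by
    rw [sub_ne_zero]
    exact fun h => by simpa [hne] using congrFun h i
  obtain ⟨p, hp⟩ := exists_rankedOutcomes_eq hi hij hw hrapp hrpos
  simpa only [rankedOutcomes_apply, Prod.mk.injEq] using
    infinite_setOf_map_eq hker (rankedOutcomes_single_one_sub_single_one hi hj) hp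

end RankedOutcomes

section ApprovalHat

variable {n : ℕ}

lemma sum_approvalHat (i : Fin (n - 1)) : ∑ c, approvalHat n i c = 0 := by
  have hn : (n : ℚ) ≠ 0 := by
    have := i.isLt
    exact_mod_cast (by omega : n ≠ 0)
  have card_approved : Finset.card {c : Fin n | (c : ℕ) ≤ i} = (i : ℕ) + 1 := by
    have := i.isLt
    simp_rw [← Nat.lt_succ_iff, Fin.card_filter_val_lt]
    omega
  simp [approvalHat, Finset.sum_sub_distrib, Finset.sum_boole, card_approved, mul_div_cancel₀, hn]

lemma approvalHat_sub_apply_ne {i j : Fin (n - 1)} {c d : Fin n} (hci : (c : ℕ) ≤ i)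
    (hid : (i : ℕ) < d) (hdj : (d : ℕ) ≤ j) :
    (approvalHat n j - approvalHat n i) c ≠ (approvalHat n j - approvalHat n i) d := by
  have hcj : (c : ℕ) ≤ j := by omega
  simp only [approvalHat, Pi.sub_apply, hci, hcj, hid.not_ge, hdj, if_true, if_false]
  intro h
  linarith

end ApprovalHat

/-- For `n ≥ 3`, any sum-zero results vectors `r_app`, `r_pos`
and any nonzero sum-zero weighting vector `w`, there are infinitely many ranked
approval profiles `(p₁, …, p_{n−1})` whose approval outcome is `r_app` and whose
positional outcome with respect to `w` is `r_pos`. -/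
theorem infinite_ranked_approval_profiles (n : ℕ) (hn : 3 ≤ n)
    (rapp rpos : Fin n → ℚ) (hrapp : ∑ c, rapp c = 0) (hrpos : ∑ c, rpos c = 0)
    (w : Fin n → ℚ) (hw : w ≠ 0) (hw0 : ∑ c, w c = 0) :
    {p : Fin (n - 1) → (Equiv.Perm (Fin n) → ℚ) |
      (∑ i : Fin (n - 1), positionalOutcome n (approvalHat n i) (p i)) = rapp ∧
      positionalOutcome n w (∑ i : Fin (n - 1), p i) = rpos}.Infinite := by
  obtain ⟨a, b, hab⟩ := exists_ne_of_sum_eq_zero hw hw0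
  have hdiff := approvalHat_sub_apply_ne (n := n) (i := ⟨0, by omega⟩) (j := ⟨1, by omega⟩)
    (c := ⟨0, by omega⟩) (d := ⟨1, by omega⟩) (by simp) (by simp) (by simp)
  exact infinite_ranked_approval_profiles_general (u := approvalHat n) (sum_approvalHat _)
    (sum_approvalHat _) hdiff hab hrapp hrpos
end

section
/- Let n ≥ 2, 1 ≤ k ≤ n − 2, and τ ∈ ℚ. For every top-k profile p : (Fin k ↪ Fin n) → ℚ and every candidate c, Σ_{d ≠ c} P^k_τ(p)(c, d) = T_{b^τ}(p)(c), where b^τ : Fin (k+1) → ℚ is given by b^τ(i) = n − 1 − i for i < k and b^τ(k) = τ·(n − k − 1). In other words, T_{b^τ} is recoverable from the generalized pairs map P^k_τ via the linear map summing each candidate's row. -/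
/-- The weight `w*(f, c)` that a top-`k` ballot `f : Fin k ↪ Fin n` assigns to
candidate `c` under a weighting vector `w : Fin (k+1) → ℚ`: `w(i)` if `f(i) = c`
and `w(k)` if `c` is not among the top `k`. -/
def topkWeight {n k : ℕ} (w : Fin (k + 1) → ℚ) (f : Fin k ↪ Fin n) (c : Fin n) : ℚ :=
  (∑ i : Fin k, if f i = c then w i.castSucc else 0) +
    (if ∀ i, f i ≠ c then w (Fin.last k) else 0)

/-- The contribution `u_f(c, d)` of a top-`k` ballot `f` to the generalized
pairs map `P^k_τ`: `1` if `f` ranks `c` above `d`, `τ` if neither `c` nor `d`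
is ranked, and `0` otherwise (also `0` on the diagonal). -/
def pairContribution {n k : ℕ} (τ : ℚ) (f : Fin k ↪ Fin n) (c d : Fin n) : ℚ :=
  if c = d then 0
  else if ∃ i, f i = c ∧ ∀ j, f j = d → i < j then 1
  else if (¬ ∃ i, f i = c) ∧ (¬ ∃ j, f j = d) then τ
  else 0

/-!
Both sides are linear in the profile, so it suffices to compare them on a single ballot `f`.
There the row of a candidate `c` ranked at position `i` counts the candidates that are not among
`f 0, …, f i`, of which there are `n - (i + 1)`. The row of an unranked `c` equals `τ` on the
`n - k - 1` other unranked candidates and vanishes elsewhere.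
-/

/-- The weighting vector `b^τ` of the `τ`-Borda count on top-`k` ballots over `n` candidates. The
weight of an unranked candidate, `b^τ(k)`, is the value at `Fin.last k`. -/
def bordaWeight (n k : ℕ) (τ : ℚ) (i : Fin (k + 1)) : ℚ :=
  if (i : ℕ) < k then (n : ℚ) - 1 - ((i : ℕ) : ℚ) else τ * ((n : ℚ) - k - 1)

theorem bordaWeight_castSucc (n : ℕ) {k : ℕ} (τ : ℚ) (i : Fin k) :
    bordaWeight n k τ i.castSucc = n - 1 - (i : ℕ) := by
  simp [bordaWeight]

theorem bordaWeight_last (n k : ℕ) (τ : ℚ) :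
    bordaWeight n k τ (Fin.last k) = τ * (n - k - 1) := by
  simp [bordaWeight]

theorem sum_ite_mem_zero_const {α R : Type*} [Fintype α] [DecidableEq α] [NonAssocRing R]
    (s : Finset α) (a : R) :
    ∑ x, (if x ∈ s then 0 else a) = (Fintype.card α - s.card) * a := by
  rw [Finset.sum_ite, Finset.sum_const_zero, zero_add, Finset.sum_const, nsmul_eq_mul,
    Finset.filter_notMem_eq_sdiff, ← Finset.compl_eq_univ_sdiff, Finset.card_compl,
    Nat.cast_sub s.card_le_univ]

section Ballot

variable {n k : ℕ} (f : Fin k ↪ Fin n)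

theorem topkWeight_apply (w : Fin (k + 1) → ℚ) (i : Fin k) :
    topkWeight w f (f i) = w i.castSucc := by
  simp [topkWeight]

theorem topkWeight_of_notMem_range (w : Fin (k + 1) → ℚ) {c : Fin n} (hc : c ∉ Set.range f) :
    topkWeight w f c = w (Fin.last k) := by
  have hne : ∀ i, f i ≠ c := fun i hi => hc ⟨i, hi⟩
  simp [topkWeight, hne]

theorem pairContribution_self (τ : ℚ) (c : Fin n) : pairContribution τ f c c = 0 :=
  if_pos rfl

theorem pairContribution_apply (τ : ℚ) (i : Fin k) (d : Fin n) :
    pairContribution τ f (f i) d = if d ∈ (Finset.Iic i).map f then 0 else 1 := by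
  split_ifs with hd
  · obtain ⟨j, hj, rfl⟩ := Finset.mem_map.1 hd
    have hji : j ≤ i := Finset.mem_Iic.1 hj
    simp [pairContribution, hji]
  · have lt_of_apply_eq : ∀ j, f j = d → i < j := fun j hj =>
      not_le.1 fun hji => hd (Finset.mem_map.2 ⟨j, Finset.mem_Iic.2 hji, hj⟩)
    have hne : f i ≠ d := fun h => lt_irrefl i (lt_of_apply_eq i h)
    rw [pairContribution, if_neg hne, if_pos ⟨i, rfl, lt_of_apply_eq⟩]

theorem pairContribution_of_notMem_range (τ : ℚ) {c : Fin n} (hc : c ∉ Set.range f) (d : Fin n) :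
    pairContribution τ f c d = if d ∈ insert c (Finset.univ.map f) then 0 else τ := by
  have hne : ∀ i, f i ≠ c := fun i hi => hc ⟨i, hi⟩
  by_cases hcd : c = d
  · simp [pairContribution, hcd]
  · by_cases hd : ∃ j, f j = d <;> simp [pairContribution, hne, hcd, Ne.symm hcd, hd]

theorem sum_pairContribution_apply (τ : ℚ) (i : Fin k) :
    ∑ d, pairContribution τ f (f i) d = n - 1 - (i : ℕ) := by
  simp_rw [pairContribution_apply, sum_ite_mem_zero_const, Finset.card_map, Fin.card_Iic,
    Fintype.card_fin]
  push_cast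
  ring

theorem sum_pairContribution_of_notMem_range (τ : ℚ) {c : Fin n} (hc : c ∉ Set.range f) :
    ∑ d, pairContribution τ f c d = τ * (n - k - 1) := by
  have hc' : c ∉ Finset.univ.map f := by simpa using hc
  simp_rw [pairContribution_of_notMem_range f τ hc, sum_ite_mem_zero_const,
    Finset.card_insert_of_notMem hc', Finset.card_map, Finset.card_univ, Fintype.card_fin]
  push_cast
  ring

theorem sum_pairContribution_eq_topkWeight (τ : ℚ) (c : Fin n) :
    ∑ d, pairContribution τ f c d = topkWeight (bordaWeight n k τ) f c := by
  by_cases hc : c ∈ Set.range f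
  · obtain ⟨i, rfl⟩ := hc
    rw [sum_pairContribution_apply, topkWeight_apply, bordaWeight_castSucc]
  · rw [sum_pairContribution_of_notMem_range f τ hc, topkWeight_of_notMem_range f _ hc,
      bordaWeight_last]

theorem sum_ne_pairContribution (τ : ℚ) (c : Fin n) :
    ∑ d ∈ Finset.univ.filter (fun d : Fin n => d ≠ c), pairContribution τ f c d =
      ∑ d, pairContribution τ f c d := by
  rw [Finset.filter_ne', Finset.sum_erase _ (pairContribution_self f τ c)]

end Ballot

theorem row_sum_of_generalized_pairs_general (n k : ℕ) (τ : ℚ)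
    (p : (Fin k ↪ Fin n) → ℚ) (c : Fin n) :
    ∑ d ∈ Finset.univ.filter (fun d : Fin n => d ≠ c),
        ∑ f : Fin k ↪ Fin n, p f * pairContribution τ f c d =
      ∑ f : Fin k ↪ Fin n, p f * topkWeight (bordaWeight n k τ) f c := by
  rw [Finset.sum_comm]
  refine Finset.sum_congr rfl fun f _ => ?_
  rw [← Finset.mul_sum, sum_ne_pairContribution, sum_pairContribution_eq_topkWeight]

/-- For `n ≥ 2`, `1 ≤ k ≤ n − 2` and any `τ : ℚ`, summing
each candidate's row of the generalized pairs map `P^k_τ` recovers the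
positional map `T_{b^τ}`, where `b^τ(i) = n − 1 − i` for `i < k` and
`b^τ(k) = τ·(n − k − 1)`. -/
theorem row_sum_of_generalized_pairs (n k : ℕ) (hn : 2 ≤ n)
    (hk1 : 1 ≤ k) (hk2 : k ≤ n - 2) (τ : ℚ)
    (p : (Fin k ↪ Fin n) → ℚ) (c : Fin n) :
    ∑ d ∈ Finset.univ.filter (fun d : Fin n => d ≠ c),
        ∑ f : Fin k ↪ Fin n, p f * pairContribution τ f c d =
      ∑ f : Fin k ↪ Fin n, p f *
        topkWeight (fun i : Fin (k + 1) =>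
          if (i : ℕ) < k then (n : ℚ) - 1 - ((i : ℕ) : ℚ)
          else τ * ((n : ℚ) - k - 1)) f c :=
  row_sum_of_generalized_pairs_general n k τ p c
end

section
/- Let n ≥ 2 and 1 ≤ k ≤ n − 1, and let w : Fin (k+1) → ℚ be a weighting vector with extension w̄ : Fin n → ℚ (w̄(j) = w(j) for j < k and w̄(j) = w(k) for j ≥ k). For a top-k profile p : (Fin k ↪ Fin n) → ℚ, define the lifted full-ranking profile p̄ : Equiv.Perm (Fin n) → ℚ by p̄(σ) = (1/(n−k)!)·p(f_σ), where f_σ : Fin k ↪ Fin n is the embedding sending i to σ(i) (the top-k part of σ). Then the two positional outcomes agree: for every candidate c, Σ_{σ ∈ Equiv.Perm (Fin n)} p̄(σ)·w̄(σ⁻¹(c)) = T_w(p)(c). -/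
/-- The extension `w̄ : Fin n → ℚ` of a top-`k` weighting vector
`w : Fin (k+1) → ℚ`. -/
def extendWeight (n k : ℕ) (w : Fin (k + 1) → ℚ) : Fin n → ℚ :=
  fun j => if h : (j : ℕ) < k then w ⟨(j : ℕ), Nat.lt_succ_of_lt h⟩ else w (Fin.last k)

/-- The top-`k` part `f_σ : Fin k ↪ Fin n` of a full ranking
`σ : Equiv.Perm (Fin n)`, sending `i` to `σ(i)`. -/
def topkPart (n k : ℕ) (h : k ≤ n) (σ : Equiv.Perm (Fin n)) : Fin k ↪ Fin n :=
  (Fin.castLEEmb h).trans σ.toEmbedding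

/-!
The map `σ ↦ f_σ` is the orbit map `σ ↦ σ • e` of the standard embedding `e : Fin k ↪ Fin n`, under
postcomposition by permutations. The action is transitive, so all fibres have the size of the
stabilizer of `e`, which is `(n - k)!` by the orbit-stabilizer theorem. Since
`w̄(σ⁻¹ c) = w*(f_σ, c)` depends on `σ` only through `f_σ`, summing over `σ` counts each ballot
`(n - k)!` times.
-/

section OrbitMap

variable {G X : Type*} [Group G] [MulAction G X] [MulAction.IsPretransitive G X]

lemma card_smul_eq_eq_card_stabilizer (x y : X) :
    Nat.card {g : G // g • x = y} = Nat.card (MulAction.stabilizer G x) := by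
  obtain ⟨h, rfl⟩ := MulAction.exists_smul_eq G x y
  refine Nat.card_congr ((Equiv.mulLeft h⁻¹).subtypeEquiv fun g => ?_)
  rw [MulAction.mem_stabilizer_iff, Equiv.coe_mulLeft, mul_smul, inv_smul_eq_iff]

lemma sum_smul_eq_card_stabilizer_nsmul_sum [Fintype G] [Fintype X] {M : Type*} [AddCommMonoid M]
    (x : X) (F : X → M) :
    ∑ g : G, F (g • x) = Nat.card (MulAction.stabilizer G x) • ∑ y, F y := by
  classical
  calc ∑ g : G, F (g • x)
      = ∑ y, ∑ _g : {g : G // g • x = y}, F y := (Fintype.sum_fiberwise' _ F).symm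
    _ = ∑ y, Nat.card (MulAction.stabilizer G x) • F y := by
      simp only [Finset.sum_const, Finset.card_univ, ← Nat.card_eq_fintype_card,
        card_smul_eq_eq_card_stabilizer]
    _ = Nat.card (MulAction.stabilizer G x) • ∑ y, F y := Finset.smul_sum.symm

end OrbitMap

section PermEmbedding

variable {α β : Type*}

instance isPretransitive_perm_embedding [Finite α] :
    MulAction.IsPretransitive (Equiv.Perm β) (α ↪ β) where
  exists_smul_eq := Equiv.Perm.exists_smul_eq_embedding

lemma card_stabilizer_perm_embedding [Finite β] (e : α ↪ β) :
    Nat.card (MulAction.stabilizer (Equiv.Perm β) e) =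
      (Nat.card β - Nat.card α).factorial := by
  have : Finite α := Finite.of_injective e e.injective
  have hcard : Nat.card α ≤ Nat.card β := Nat.card_le_card_of_injective e e.injective
  have card_embedding : Nat.card (α ↪ β) = (Nat.card β).descFactorial (Nat.card α) := by
    have := Fintype.ofFinite α
    have := Fintype.ofFinite β
    simp only [Nat.card_eq_fintype_card, Fintype.card_embedding_eq]
  have orbit_stabilizer := (MulAction.stabilizer (Equiv.Perm β) e).card_mul_index
  rw [MulAction.index_stabilizer_of_transitive, card_embedding, Nat.card_perm,
    ← Nat.factorial_mul_descFactorial hcard] at orbit_stabilizer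
  exact Nat.eq_of_mul_eq_mul_right (Nat.descFactorial_pos.mpr hcard) orbit_stabilizer

end PermEmbedding

section PositionalWeights

variable {n k : ℕ} (w : Fin (k + 1) → ℚ)

lemma topkWeight_apply_self (f : Fin k ↪ Fin n) (i : Fin k) :
    topkWeight w f (f i) = w i.castSucc := by
  simp [topkWeight]

lemma topkWeight_of_forall_ne {f : Fin k ↪ Fin n} {c : Fin n} (hc : ∀ i, f i ≠ c) :
    topkWeight w f c = w (Fin.last k) := by
  simp [topkWeight, hc]

lemma extendWeight_castLE (h : k ≤ n) (i : Fin k) :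
    extendWeight n k w (Fin.castLE h i) = w i.castSucc :=
  dif_pos i.isLt

lemma extendWeight_of_le {j : Fin n} (hj : k ≤ j) :
    extendWeight n k w j = w (Fin.last k) :=
  dif_neg hj.not_gt

lemma topkPart_apply (h : k ≤ n) (σ : Equiv.Perm (Fin n)) (i : Fin k) :
    topkPart n k h σ i = σ (Fin.castLE h i) := rfl

lemma topkPart_eq_smul (h : k ≤ n) (σ : Equiv.Perm (Fin n)) :
    topkPart n k h σ = σ • Fin.castLEEmb h := rfl

lemma extendWeight_inv_apply_eq_topkWeight (h : k ≤ n) (σ : Equiv.Perm (Fin n)) (c : Fin n) :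
    extendWeight n k w (σ⁻¹ c) = topkWeight w (topkPart n k h σ) c := by
  obtain ⟨j, rfl⟩ := σ.surjective c
  rw [Equiv.Perm.inv_def, Equiv.symm_apply_apply]
  rcases lt_or_ge (j : ℕ) k with hjk | hkj
  · obtain ⟨i, rfl⟩ : ∃ i : Fin k, Fin.castLE h i = j := ⟨⟨j, hjk⟩, rfl⟩
    rw [extendWeight_castLE, ← topkPart_apply, topkWeight_apply_self]
  · have unranked : ∀ i, topkPart n k h σ i ≠ σ j := fun i hi =>
      (i.isLt.trans_le hkj).ne (congrArg Fin.val (σ.injective hi))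
    rw [extendWeight_of_le w hkj, topkWeight_of_forall_ne w unranked]

lemma sum_topkPart_eq_factorial_nsmul_sum {M : Type*} [AddCommMonoid M] (h : k ≤ n)
    (F : (Fin k ↪ Fin n) → M) :
    ∑ σ, F (topkPart n k h σ) = (n - k).factorial • ∑ f, F f := by
  simp only [topkPart_eq_smul, sum_smul_eq_card_stabilizer_nsmul_sum,
    card_stabilizer_perm_embedding, Nat.card_fin]

end PositionalWeights

/-- For `n ≥ 2`, `1 ≤ k ≤ n − 1`, a weighting vector
`w : Fin (k+1) → ℚ` with extension `w̄`, and a top-`k` profile `p`, the lifted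
full-ranking profile `p̄(σ) = p(f_σ)/(n−k)!` has the same positional outcome
with respect to `w̄` as `p` does with respect to `w`. -/
theorem lifted_profile_same_outcome (n k : ℕ) (hn : 2 ≤ n)
    (hk1 : 1 ≤ k) (hk2 : k ≤ n - 1)
    (w : Fin (k + 1) → ℚ) (p : (Fin k ↪ Fin n) → ℚ) (c : Fin n) :
    ∑ σ : Equiv.Perm (Fin n),
        ((1 / ((n - k).factorial : ℚ)) * p (topkPart n k (by omega) σ)) *
          extendWeight n k w (σ⁻¹ c) =
      ∑ f : Fin k ↪ Fin n, p f * topkWeight w f c := by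
  have hkn : k ≤ n := by omega
  have hfact : ((n - k).factorial : ℚ) ≠ 0 := Nat.cast_ne_zero.mpr (n - k).factorial_ne_zero
  calc ∑ σ : Equiv.Perm (Fin n),
        ((1 / ((n - k).factorial : ℚ)) * p (topkPart n k hkn σ)) * extendWeight n k w (σ⁻¹ c)
      = (1 / ((n - k).factorial : ℚ)) *
          ∑ σ, p (topkPart n k hkn σ) * topkWeight w (topkPart n k hkn σ) c := by
        simp only [extendWeight_inv_apply_eq_topkWeight w hkn, Finset.mul_sum, mul_assoc]
    _ = (1 / ((n - k).factorial : ℚ)) *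
          ((n - k).factorial • ∑ f : Fin k ↪ Fin n, p f * topkWeight w f c) := by
        rw [sum_topkPart_eq_factorial_nsmul_sum hkn fun f => p f * topkWeight w f c]
    _ = ∑ f : Fin k ↪ Fin n, p f * topkWeight w f c := by
        rw [nsmul_eq_mul, one_div, inv_mul_cancel_left₀ hfact]
end
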